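/- Let α < ε₀ be an ordinal and N > 0 a natural number with ω_N →_N α+1. Then for every n ≥ N, F_{ω_n+α}(F_{ε₀}(n−1)) ≤ F_{ε₀}(n). -/

import Mathlib

/-!
The jump from `F_{ε₀}(n-1)` to `F_{ε₀}(n)` is the jump from `F_{ω_n}(n-1)` to `F_{ω_{n+1}}(n)`, so
the claim compares indices `ω_n` and `ω_{n+1}` of the fast-growing hierarchy. The bridge is the
step-down relation: `β →_n γ` implies `F_γ(n) ≤ F_β(n)` (`fgh_le_of_stepDown`).

From `ω_N →_N α+1` one gets `ω_n →_n α+1`, because `ω_n →_n ω_N` and because a step-down path for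
`N` can be refined to one for any larger `n` (`stepDown_mono`). Moreover `ω_{n+1} →_n ω_n + ω_n` for
`n ≥ 1` (`stepDown_tower_double`), and adding `ω_n` on the left of a path starting at `ω_n` gives a
path again (`stepDown_add`), as no absorption occurs. Altogether `ω_{n+1} →_n ω_n + α + 1`, whence
`F_{ω_{n+1}}(n) ≥ F_{ω_n+α}^{[n+1]}(n) ≥ F_{ω_n+α}(F_{ω_n+α}(n)) ≥ F_{ω_n+α}(F_{ω_n}(n-1))`,
using that `F_{ω_n+α}` is increasing and that `ω_n + α →_n ω_n`.

Everything about fundamental sequences rests on writing a nonzero ordinal as `ω^γ·(ξ+1)`: then `γ`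
is the least exponent of the Cantor normal form, and `ξ` encodes all remaining terms at once.
-/


open Ordinal
open scoped Classical

noncomputable section

/-- `omegaTower m α` is `ω_m^α`: the `m`-fold iterated `ω`-power tower on top of `α`. -/
noncomputable def omegaTower : ℕ → Ordinal.{0} → Ordinal.{0}
  | 0, α => α
  | m + 1, α => omega0 ^ (omegaTower m α)

/-- `ε₀`, the least ordinal `ε` with `ω ^ ε = ε`. -/
noncomputable def eps0 : Ordinal.{0} := Ordinal.nfp (fun a => omega0 ^ a) 0

/-- The fundamental sequence `{α}(n)` for ordinals below `ε₀`:
`{0}(n) = 0`, `{β+1}(n) = β`, and for a limit `α = β + ω^γ·(k+1)` (with `γ > 0` the least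
exponent of the Cantor normal form) we set `{α}(n) = β + ω^γ·k + ω^δ·(n+1)` if `γ = δ+1`
and `{α}(n) = β + ω^γ·k + ω^{{γ}(n)}` if `γ` is a limit.  Here `γ` is recovered as the
largest exponent with `ω^γ ∣ α`, and `β + ω^γ·k = ω^γ · pred (α / ω^γ)`. -/
noncomputable def fundSeq (α : Ordinal.{0}) (n : ℕ) : Ordinal.{0} :=
  if _h0 : α = 0 then 0
  else if hs : ∃ β, α = β + 1 then Classical.choose hs
  else
    let γ : Ordinal := sSup {c : Ordinal | omega0 ^ c ∣ α}
    if hγ : ∃ δ, γ = δ + 1 then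
      omega0 ^ γ * Ordinal.pred (α / omega0 ^ γ) +
        omega0 ^ (Classical.choose hγ) * ((n : Ordinal) + 1)
    else if hlt : γ < α then
      omega0 ^ γ * Ordinal.pred (α / omega0 ^ γ) + omega0 ^ (fundSeq γ n)
    else 0
termination_by α
decreasing_by exact hlt

/-- The step-down relation `β →_n γ`: there is a finite sequence from `β` to `γ`
each step of which descends to the `n`-th member of the fundamental sequence. -/
def stepDown (n : ℕ) (β γ : Ordinal.{0}) : Prop :=
  Relation.ReflTransGen (fun a b => fundSeq a n = b) β γ

/-- The fast-growing hierarchy `F_α` for `α < ε₀`: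
`F_0(x) = x+1`, `F_{α+1}(x) = F_α^[x+1](x)`, `F_λ(x) = F_{{λ}(x)}(x)` for limits. -/
noncomputable def fgh (α : Ordinal.{0}) : ℕ → ℕ :=
  if _h0 : α = 0 then fun x => x + 1
  else if hs : ∃ β, α = β + 1 then fun x => (fgh (Classical.choose hs))^[x + 1] x
  else fun x => if hlt : fundSeq α x < α then fgh (fundSeq α x) x else 0
termination_by α
decreasing_by
  · calc Classical.choose hs < Classical.choose hs + 1 := by
          rw [Ordinal.add_one_eq_succ]; exact Order.lt_succ _
      _ = α := (Classical.choose_spec hs).symm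
  · exact hlt

/-- `F_{ε₀}(x) := F_{ω_{x+1}}(x)`. -/
noncomputable def Feps0 (x : ℕ) : ℕ := fgh (omegaTower (x + 1) 1) x

/-- The inverse `F_{ε₀}^{-1}(x) := max({z ≤ x : F_{ε₀}(z) ≤ x} ∪ {0})`. -/
noncomputable def Feps0Inv (x : ℕ) : ℕ :=
  sSup ({z : ℕ | z ≤ x ∧ Feps0 z ≤ x} ∪ {0})

/-- The slow function `F^⋄_{ε₀}(x) := F_{ω_{F_{ε₀}^{-1}(x)+1}}(x)`. -/
noncomputable def slowFeps0 (x : ℕ) : ℕ := fgh (omegaTower (Feps0Inv x + 1) 1) x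

/-- The slow hierarchy `F^⋄_{ε₀+α}` for `α < ε₀`:
`F^⋄_{ε₀+0} = F^⋄_{ε₀}`, `F^⋄_{ε₀+α+1}(n) = (F^⋄_{ε₀+α})^[n+1](n)`, and
`F^⋄_{ε₀+λ}(n) = F^⋄_{ε₀+{λ}(n)}(n)` for limits `λ`. -/
noncomputable def slowF (α : Ordinal.{0}) : ℕ → ℕ :=
  if _h0 : α = 0 then slowFeps0
  else if hs : ∃ β, α = β + 1 then fun n => (slowF (Classical.choose hs))^[n + 1] n
  else fun n => if hlt : fundSeq α n < α then slowF (fundSeq α n) n else 0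
termination_by α
decreasing_by
  · calc Classical.choose hs < Classical.choose hs + 1 := by
          rw [Ordinal.add_one_eq_succ]; exact Order.lt_succ _
      _ = α := (Classical.choose_spec hs).symm
  · exact hlt

/-- A nonempty finite set of naturals is *large* if its cardinality is at least
its minimum. -/
def IsLargeSet (Y : Finset ℕ) : Prop := ∃ hY : Y.Nonempty, Y.min' hY ≤ Y.card

/-- The Paris–Harrington statement `PH(k, m, n, N)`: every `k`-colouring of the
`n`-element subsets of `{0, …, N-1}` admits a large homogeneous set with at least
`m` elements. -/
def PH (k m n N : ℕ) : Prop :=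
  ∀ f : Finset ℕ → Fin k,
    ∃ Y : Finset ℕ, Y ⊆ Finset.range N ∧ m ≤ Y.card ∧ IsLargeSet Y ∧
      ∀ s t : Finset ℕ, s ⊆ Y → t ⊆ Y → s.card = n → t.card = n → f s = f t

/-- `σ(n, k)`: the least `N` such that every `k`-colouring of the `n`-element subsets of
`{0, …, N-1}` admits a large homogeneous set with at least `n+1` elements. -/
noncomputable def sigmaPH (n k : ℕ) : ℕ := sInf {N | PH k (n + 1) n N}

/-! ### Computing the fundamental sequences -/

lemma not_succ_of_omega0_dvd {a : Ordinal.{0}} (h : omega0 ∣ a) : ¬ ∃ β, a = β + 1 := by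
  rintro ⟨β, rfl⟩
  exact Order.not_isSuccPrelimit_succ β (isSuccPrelimit_iff_omega0_dvd.2 h)

/-- Every nonzero ordinal is `ω^γ·(ξ+1)`, with `γ` its least Cantor normal form exponent. -/
lemma exists_eq_opow_mul (a : Ordinal.{0}) (ha : a ≠ 0) :
    ∃ γ ξ : Ordinal.{0}, a = omega0 ^ γ * (ξ + 1) := by
  induction a using WellFoundedLT.induction with
  | ind a ih =>
    have hdiv := Ordinal.div_add_mod a (omega0 ^ log omega0 a)
    obtain ⟨k, hk⟩ := lt_omega0.1 (div_opow_log_lt a one_lt_omega0)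
    by_cases hr : a % omega0 ^ log omega0 a = 0
    · rw [hr, add_zero, hk] at hdiv
      have hk0 : k ≠ 0 := by
        rintro rfl
        simp at hdiv
        exact ha hdiv.symm
      obtain ⟨j, rfl⟩ := Nat.exists_eq_succ_of_ne_zero hk0
      exact ⟨_, j, by rw [← hdiv]; push_cast; rfl⟩
    · have hlt := mod_opow_log_lt_self omega0 ha
      obtain ⟨γ, ξ, h⟩ := ih _ hlt hr
      have hγ : γ ≤ log omega0 a := by
        rw [← opow_le_opow_iff_right one_lt_omega0]
        refine le_trans ?_ (Ordinal.mod_lt a (opow_ne_zero _ omega0_ne_zero)).le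
        exact le_of_dvd hr (h ▸ dvd_mul_right _ _)
      obtain ⟨d, hd⟩ := opow_dvd_opow omega0 hγ
      refine ⟨γ, d * (a / omega0 ^ log omega0 a) + ξ, ?_⟩
      rw [add_assoc, mul_add, ← mul_assoc, ← hd, ← h, hdiv]

lemma omega0_dvd_opow_mul {γ : Ordinal.{0}} (hγ : γ ≠ 0) (ξ : Ordinal.{0}) :
    omega0 ∣ omega0 ^ γ * ξ := by
  refine Dvd.dvd.mul_right ?_ _
  simpa using opow_dvd_opow omega0 (Order.one_le_iff_ne_zero.2 hγ)

lemma sSup_exponents (γ ξ : Ordinal.{0}) :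
    sSup {c : Ordinal | omega0 ^ c ∣ omega0 ^ γ * (ξ + 1)} = γ := by
  have : {c : Ordinal.{0} | omega0 ^ c ∣ omega0 ^ γ * (ξ + 1)} = Set.Iic γ := by
    ext c
    constructor
    · intro h
      by_contra hc
      have hc' : γ + 1 ≤ c := by simpa using hc
      obtain ⟨d, hd⟩ := (opow_dvd_opow omega0 hc').trans h
      rw [opow_add, opow_one, mul_assoc] at hd
      have := mul_left_cancel₀ (opow_ne_zero γ omega0_ne_zero) hd
      exact not_succ_of_omega0_dvd (dvd_mul_right omega0 d) ⟨ξ, this.symm⟩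
    · intro h
      exact (opow_dvd_opow omega0 h).mul_right _
  rw [this, csSup_Iic]

lemma fundSeq_zero (n : ℕ) : fundSeq 0 n = 0 := by
  rw [fundSeq]; simp

lemma choose_add_one {β : Ordinal.{0}} (h : ∃ δ, β + 1 = δ + 1) : Classical.choose h = β := by
  exact (Order.succ_injective (Classical.choose_spec h)).symm

lemma fundSeq_add_one (β : Ordinal.{0}) (n : ℕ) : fundSeq (β + 1) n = β := by
  rw [fundSeq, dif_neg (by simp), dif_pos ⟨β, rfl⟩]
  exact choose_add_one _

lemma opow_mul_ne_zero (γ ξ : Ordinal.{0}) : omega0 ^ γ * (ξ + 1) ≠ 0 :=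
  mul_ne_zero (opow_ne_zero _ omega0_ne_zero) (by simp)

lemma pred_div (γ ξ : Ordinal.{0}) :
    Ordinal.pred (omega0 ^ γ * (ξ + 1) / omega0 ^ γ) = ξ := by
  rw [Ordinal.mul_div_cancel _ (opow_ne_zero _ omega0_ne_zero), pred_add_one]

lemma fundSeq_opow_succ (δ ξ : Ordinal.{0}) (n : ℕ) :
    fundSeq (omega0 ^ (δ + 1) * (ξ + 1)) n
      = omega0 ^ (δ + 1) * ξ + omega0 ^ δ * ((n : Ordinal) + 1) := by
  rw [fundSeq, dif_neg (opow_mul_ne_zero _ _),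
    dif_neg (not_succ_of_omega0_dvd (omega0_dvd_opow_mul (by simp) _))]
  simp only [sSup_exponents, pred_div]
  rw [dif_pos ⟨δ, rfl⟩, choose_add_one]

lemma fundSeq_opow_limit {γ : Ordinal.{0}} (h0 : γ ≠ 0) (hs : ¬ ∃ δ, γ = δ + 1)
    (hγ : γ < omega0 ^ γ) (ξ : Ordinal.{0}) (n : ℕ) :
    fundSeq (omega0 ^ γ * (ξ + 1)) n = omega0 ^ γ * ξ + omega0 ^ (fundSeq γ n) := by
  rw [fundSeq, dif_neg (opow_mul_ne_zero _ _),
    dif_neg (not_succ_of_omega0_dvd (omega0_dvd_opow_mul h0 _))]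
  simp only [sSup_exponents, pred_div]
  rw [dif_neg hs, dif_pos]
  exact hγ.trans_le (le_mul_of_one_le_right' (by simp))

/-! ### Ordinals below `ε₀` -/

lemma lt_opow_self {γ : Ordinal.{0}} (h : γ < eps0) : γ < omega0 ^ γ := by
  by_contra hc
  exact h.not_ge (nfp_le_fp (isNormal_opow one_lt_omega0).monotone zero_le (not_lt.1 hc))

lemma opow_lt_eps0 {γ : Ordinal.{0}} (h : γ < eps0) : omega0 ^ γ < eps0 :=
  (apply_lt_nfp (isNormal_opow one_lt_omega0)).2 h

lemma tower_lt_eps0 (m : ℕ) : omegaTower m 1 < eps0 := by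
  induction m with
  | zero =>
    have h : (0 : Ordinal.{0}) < eps0 := lt_nfp_iff.2 ⟨1, by simp⟩
    simpa [omegaTower] using opow_lt_eps0 h
  | succ m ih => exact opow_lt_eps0 ih

/-- Below `ε₀`, the exponent `γ` of a term `ω^γ·(ξ+1)` is again below `ε₀`. -/
lemma exponent_lt {γ ξ : Ordinal.{0}} (h : omega0 ^ γ * (ξ + 1) < eps0) : γ < eps0 :=
  (right_le_opow γ one_lt_omega0).trans_lt ((le_mul_of_one_le_right' (by simp)).trans_lt h)

lemma exponent_lt_self {γ ξ : Ordinal.{0}} (h : omega0 ^ γ * (ξ + 1) < eps0) :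
    γ < omega0 ^ γ * (ξ + 1) :=
  (lt_opow_self (exponent_lt h)).trans_le (le_mul_of_one_le_right' (by simp))

/-- Case analysis below `ε₀`: zero, successor, `ω^(δ+1)·(ξ+1)`, or `ω^γ·(ξ+1)` with `γ` a limit. -/
lemma cases_lt_eps0 {a : Ordinal.{0}} (h : a < eps0) :
    a = 0 ∨ (∃ β, a = β + 1) ∨ (∃ δ ξ : Ordinal.{0}, a = omega0 ^ (δ + 1) * (ξ + 1)) ∨
      ∃ γ ξ : Ordinal.{0}, a = omega0 ^ γ * (ξ + 1) ∧ γ ≠ 0 ∧ (¬ ∃ δ, γ = δ + 1) ∧ γ < omega0 ^ γ := by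
  by_cases h0 : a = 0
  · exact Or.inl h0
  obtain ⟨γ, ξ, rfl⟩ := exists_eq_opow_mul a h0
  by_cases hγ : γ = 0
  · subst hγ
    exact Or.inr (Or.inl ⟨ξ, by simp⟩)
  by_cases hs : ∃ δ, γ = δ + 1
  · obtain ⟨δ, rfl⟩ := hs
    exact Or.inr (Or.inr (Or.inl ⟨δ, ξ, rfl⟩))
  · exact Or.inr (Or.inr (Or.inr ⟨γ, ξ, rfl, hγ, hs, lt_opow_self (exponent_lt h)⟩))

lemma fundSeq_lt {a : Ordinal.{0}} (h : a < eps0) (h0 : a ≠ 0) (n : ℕ) : fundSeq a n < a := by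
  induction a using WellFoundedLT.induction with
  | ind a ih =>
    rcases cases_lt_eps0 h with rfl | ⟨β, rfl⟩ | ⟨δ, ξ, rfl⟩ | ⟨γ, ξ, rfl, hγ, hs, hlt⟩
    · exact absurd rfl h0
    · rw [fundSeq_add_one]; simp
    · rw [fundSeq_opow_succ, mul_add _ ξ, mul_one]
      have := opow_mul_lt_opow (natCast_lt_omega0 (n + 1)) (show δ < δ + 1 by simp)
      push_cast at this
      exact (add_lt_add_iff_left _).2 this
    · rw [fundSeq_opow_limit hγ hs hlt, mul_add, mul_one]
      have := ih γ (exponent_lt_self h) (exponent_lt h) hγ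
      have := (opow_lt_opow_iff_right one_lt_omega0).2 this
      gcongr

lemma fundSeq_le {a : Ordinal.{0}} (h : a < eps0) (n : ℕ) : fundSeq a n ≤ a := by
  by_cases h0 : a = 0
  · rw [h0, fundSeq_zero]
  · exact (fundSeq_lt h h0 n).le

/-! ### The step-down relation -/

lemma stepDown_fundSeq (n : ℕ) (a : Ordinal.{0}) : stepDown n a (fundSeq a n) :=
  Relation.ReflTransGen.single rfl

lemma stepDown.le {n : ℕ} {a b : Ordinal.{0}} (h : stepDown n a b) (ha : a < eps0) : b ≤ a := by
  induction h with
  | refl => exact le_rfl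
  | tail _ hbc ih => subst hbc; exact (fundSeq_le (ih.trans_lt ha) n).trans ih

lemma stepDown_zero (n : ℕ) {a : Ordinal.{0}} (h : a < eps0) : stepDown n a 0 := by
  induction a using WellFoundedLT.induction with
  | ind a ih =>
    by_cases h0 : a = 0
    · rw [h0]; exact Relation.ReflTransGen.refl
    · have hlt := fundSeq_lt h h0 n
      exact (stepDown_fundSeq n a).trans (ih _ hlt (hlt.trans h))

/-- Adding a multiple of `ω^ν` on the left of `β ≤ ω^ν` absorbs nothing, so taking
fundamental sequences commutes with the addition. -/
lemma fundSeq_add {ν ζ β : Ordinal.{0}} (hβ : β < eps0) (h0 : β ≠ 0) (hν : β ≤ omega0 ^ ν)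
    (n : ℕ) : fundSeq (omega0 ^ ν * ζ + β) n = omega0 ^ ν * ζ + fundSeq β n := by
  obtain ⟨γ, ξ, rfl⟩ := exists_eq_opow_mul β h0
  have hγ : γ ≤ ν := by
    rw [← opow_le_opow_iff_right one_lt_omega0]
    exact (le_mul_of_one_le_right' (by simp)).trans hν
  obtain ⟨d, hd⟩ := opow_dvd_opow omega0 hγ
  have key : ∀ x, omega0 ^ ν * ζ + omega0 ^ γ * x = omega0 ^ γ * (d * ζ + x) := by
    intro x
    rw [mul_add, ← mul_assoc, ← hd]
  have hlt := lt_opow_self (exponent_lt hβ)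
  rw [key, ← add_assoc]
  by_cases hγ0 : γ = 0
  · subst hγ0
    have := key ξ
    simp only [opow_zero, one_mul] at this ⊢
    rw [fundSeq_add_one, fundSeq_add_one, this]
  by_cases hs : ∃ δ, γ = δ + 1
  · obtain ⟨δ, rfl⟩ := hs
    rw [fundSeq_opow_succ, fundSeq_opow_succ, ← add_assoc, key]
  · rw [fundSeq_opow_limit hγ0 hs hlt, fundSeq_opow_limit hγ0 hs hlt, ← add_assoc, key]

lemma stepDown_add {n : ℕ} {ν β β' : Ordinal.{0}} (ζ : Ordinal.{0}) (h : stepDown n β β')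
    (hβ : β < eps0) (hν : β ≤ omega0 ^ ν) :
    stepDown n (omega0 ^ ν * ζ + β) (omega0 ^ ν * ζ + β') := by
  induction h with
  | refl => exact Relation.ReflTransGen.refl
  | @tail b c hab hbc ih =>
    have hb : b ≤ β := stepDown.le hab hβ
    by_cases h0 : b = 0
    · subst hbc; subst h0
      rw [fundSeq_zero]; exact ih
    · refine ih.tail ?_
      rw [fundSeq_add (hb.trans_lt hβ) h0 (hb.trans hν), hbc]

/-- `c' + ω^δ·k →_n c' + ω^δ·j` for `j ≤ k` and `c'` a multiple of `ω^(δ+1)`: the terms `ω^δ` beyond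
the first `j` step down to zero one by one. -/
lemma stepDown_opow_mul_nat {δ : Ordinal.{0}} (hδ : δ < eps0) (c : Ordinal.{0}) (n j i : ℕ) :
    stepDown n (omega0 ^ (δ + 1) * c + omega0 ^ δ * ((j + i : ℕ) : Ordinal))
      (omega0 ^ (δ + 1) * c + omega0 ^ δ * (j : Ordinal)) := by
  induction i with
  | zero => exact Relation.ReflTransGen.refl
  | succ i ih =>
    refine Relation.ReflTransGen.trans ?_ ih
    have key : ∀ x : Ordinal.{0}, omega0 ^ (δ + 1) * c + omega0 ^ δ * x
        = omega0 ^ δ * (omega0 * c + x) := by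
      intro x
      rw [mul_add, ← mul_assoc, opow_add, opow_one]
    have h := stepDown_add (omega0 * c + ((j + i : ℕ) : Ordinal))
      (stepDown_zero n (opow_lt_eps0 hδ)) (opow_lt_eps0 hδ) le_rfl
    rw [add_zero] at h
    rw [key, key, ← add_assoc j i 1, Nat.cast_add_one, ← add_assoc, mul_add (omega0 ^ δ) _ 1,
      mul_one]
    exact h

lemma stepDown_opow {n : ℕ} {γ γ' : Ordinal.{0}} (h : stepDown n γ γ') (hγ : γ < eps0) :
    stepDown n (omega0 ^ γ) (omega0 ^ γ') := by
  induction h with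
  | refl => exact Relation.ReflTransGen.refl
  | @tail b c hab hbc ih =>
    have hb : b < eps0 := (stepDown.le hab hγ).trans_lt hγ
    refine Relation.ReflTransGen.trans ih ?_
    subst hbc
    by_cases h0 : b = 0
    · subst h0; rw [fundSeq_zero]
    by_cases hs : ∃ δ, b = δ + 1
    · obtain ⟨δ, rfl⟩ := hs
      rw [fundSeq_add_one]
      have h1 := stepDown_fundSeq n (omega0 ^ (δ + 1) * (0 + 1))
      rw [fundSeq_opow_succ] at h1
      have hδ : δ < eps0 := (show δ < δ + 1 by simp).trans hb
      have h2 := stepDown_opow_mul_nat hδ 0 n 1 n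
      rw [add_comm 1 n] at h2
      push_cast at h2
      simpa using Relation.ReflTransGen.trans h1 h2
    · have h1 := stepDown_fundSeq n (omega0 ^ b * (0 + 1))
      rw [fundSeq_opow_limit h0 hs (lt_opow_self hb)] at h1
      simp only [zero_add, mul_zero, mul_one] at h1
      exact h1

/-- The Bachmann property: earlier members of a fundamental sequence are reached from later ones. -/
lemma stepDown_fundSeq_fundSeq {m n : ℕ} (hmn : m ≤ n) {a : Ordinal.{0}} (h : a < eps0) :
    stepDown n (fundSeq a n) (fundSeq a m) := by
  induction a using WellFoundedLT.induction with
  | ind a ih =>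
    rcases cases_lt_eps0 h with rfl | ⟨β, rfl⟩ | ⟨δ, ξ, rfl⟩ | ⟨γ, ξ, rfl, hγ, hs, hlt⟩
    · rw [fundSeq_zero, fundSeq_zero]; exact Relation.ReflTransGen.refl
    · rw [fundSeq_add_one, fundSeq_add_one]; exact Relation.ReflTransGen.refl
    · rw [fundSeq_opow_succ, fundSeq_opow_succ]
      obtain ⟨i, rfl⟩ := Nat.exists_eq_add_of_le hmn
      have hδ : δ < eps0 := (show δ < δ + 1 by simp).trans (exponent_lt h)
      have := stepDown_opow_mul_nat hδ ξ (m + i) (m + 1) i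
      rw [add_right_comm] at this
      simpa using this
    · rw [fundSeq_opow_limit hγ hs hlt, fundSeq_opow_limit hγ hs hlt]
      have hγe := exponent_lt h
      have hle := fundSeq_le hγe n
      have hle' := hle.trans_lt hγe
      exact stepDown_add ξ (stepDown_opow (ih γ (exponent_lt_self h) hγe) hle')
        (opow_lt_eps0 hle') (opow_le_opow_right omega0_pos hle)

lemma stepDown_mono {m n : ℕ} (hmn : m ≤ n) {a b : Ordinal.{0}} (h : stepDown m a b)
    (ha : a < eps0) : stepDown n a b := by
  induction h with
  | refl => exact Relation.ReflTransGen.refl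
  | @tail b c hab hbc ih =>
    have hb : b < eps0 := (stepDown.le hab ha).trans_lt ha
    subst hbc
    exact ih.trans ((stepDown_fundSeq n b).trans (stepDown_fundSeq_fundSeq hmn hb))

/-! ### Stepping down from towers -/

lemma stepDown_omega0_nat (n k : ℕ) (hk : k ≤ n + 1) : stepDown n omega0 k := by
  have h1 := stepDown_fundSeq n (omega0 ^ ((0 : Ordinal) + 1) * (0 + 1))
  rw [fundSeq_opow_succ] at h1
  obtain ⟨i, hi⟩ := Nat.exists_eq_add_of_le hk
  have h2 := stepDown_opow_mul_nat (tower_lt_eps0 0 |>.trans_le' zero_le) 0 n k i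
  rw [← hi] at h2
  push_cast at h2
  have h3 : stepDown n _ _ := Relation.ReflTransGen.trans h1 h2
  simpa using h3

lemma stepDown_tower_succ (n m : ℕ) : stepDown n (omegaTower (m + 1) 1) (omegaTower m 1) := by
  induction m with
  | zero => simpa [omegaTower] using stepDown_omega0_nat n 1 (by omega)
  | succ m ih => exact stepDown_opow ih (tower_lt_eps0 _)

lemma stepDown_tower (n : ℕ) {m k : ℕ} (h : m ≤ k) :
    stepDown n (omegaTower k 1) (omegaTower m 1) := by
  induction k, h using Nat.le_induction with
  | base => exact Relation.ReflTransGen.refl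
  | succ k _ ih => exact (stepDown_tower_succ n k).trans ih

/-- Adding `ω_m` on the left of a path starting at `ω_m`. -/
lemma stepDown_tower_add {n m : ℕ} {b : Ordinal.{0}} (h : stepDown n (omegaTower m 1) b) :
    stepDown n (omegaTower m 1 + omegaTower m 1) (omegaTower m 1 + b) := by
  cases m with
  | zero =>
    have := stepDown_add (ν := 0) 1 h (tower_lt_eps0 _) (by simp [omegaTower])
    simpa [omegaTower] using this
  | succ m =>
    have := stepDown_add (ν := omegaTower m 1) 1 h (tower_lt_eps0 _) le_rfl
    rw [mul_one] at this
    exact this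

lemma stepDown_tower_double {n : ℕ} (hn : 1 ≤ n) (m : ℕ) :
    stepDown n (omegaTower (m + 1) 1) (omegaTower m 1 + omegaTower m 1) := by
  induction m with
  | zero =>
    have := stepDown_omega0_nat n 2 (by omega)
    simpa [omegaTower, one_add_one_eq_two] using this
  | succ m ih =>
    -- `ω_{m+1} →_n ω_m + 1`, so `ω_{m+2} →_n ω^(ω_m + 1) →_n ω_{m+1}·2`.
    have h1 : stepDown n (omegaTower (m + 1) 1) (omegaTower m 1 + 1) :=
      ih.trans (stepDown_tower_add (stepDown_tower n (Nat.zero_le m)))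
    have h2 := stepDown_opow h1 (tower_lt_eps0 _)
    refine Relation.ReflTransGen.trans h2 ?_
    have h3 := stepDown_fundSeq n (omega0 ^ (omegaTower m 1 + 1) * (0 + 1))
    rw [fundSeq_opow_succ] at h3
    obtain ⟨i, rfl⟩ := Nat.exists_eq_add_of_le hn
    have h4 := stepDown_opow_mul_nat (tower_lt_eps0 m) 0 (1 + i) 2 i
    have h5 : ((2 + i : ℕ) : Ordinal.{0}) = ((1 + i : ℕ) : Ordinal) + 1 := by
      rw [← Nat.cast_add_one]; congr 1; omega
    rw [h5] at h4
    have := Relation.ReflTransGen.trans h3 h4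
    have h6 : ∀ x : Ordinal.{0}, x * 2 = x + x := fun x => by
      rw [← one_add_one_eq_two, mul_add, mul_one]
    simpa only [omegaTower, zero_add, mul_zero, mul_one, Nat.cast_ofNat, h6] using this

/-! ### The fast-growing hierarchy -/

lemma fgh_zero (x : ℕ) : fgh 0 x = x + 1 := by
  rw [fgh]; simp

lemma fgh_add_one (β : Ordinal.{0}) (x : ℕ) : fgh (β + 1) x = (fgh β)^[x + 1] x := by
  rw [fgh, dif_neg (by simp), dif_pos ⟨β, rfl⟩, choose_add_one]

lemma fgh_limit {a : Ordinal.{0}} (h : a < eps0) (h0 : a ≠ 0) (hs : ¬ ∃ β, a = β + 1) (x : ℕ) :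
    fgh a x = fgh (fundSeq a x) x := by
  rw [fgh, dif_neg h0, dif_neg hs, dif_pos (fundSeq_lt h h0 x)]

lemma lt_fgh {a : Ordinal.{0}} (h : a < eps0) (x : ℕ) : x < fgh a x := by
  induction a using WellFoundedLT.induction generalizing x with
  | ind a ih =>
    by_cases h0 : a = 0
    · subst h0; rw [fgh_zero]; omega
    by_cases hs : ∃ β, a = β + 1
    · obtain ⟨β, rfl⟩ := hs
      have hlt : β < β + 1 := by simp
      rw [fgh_add_one, Function.iterate_succ_apply']
      have hβ : ∀ y, y < fgh β y := ih β hlt (hlt.trans h)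
      exact (Function.id_le_iterate_of_id_le (fun y => (hβ y).le) x x).trans_lt (hβ _)
    · rw [fgh_limit h h0 hs]
      exact ih _ (fundSeq_lt h h0 x) ((fundSeq_lt h h0 x).trans h) x

/-- If `β →_n γ` then `F_γ(n) ≤ F_β(n)`. -/
lemma fgh_le_of_stepDown {n : ℕ} {a b : Ordinal.{0}} (h : stepDown n a b) (ha : a < eps0) :
    fgh b n ≤ fgh a n := by
  induction h with
  | refl => exact le_rfl
  | @tail b c hab hbc ih =>
    have hb : b < eps0 := (stepDown.le hab ha).trans_lt ha
    refine le_trans ?_ ih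
    subst hbc
    by_cases h0 : b = 0
    · subst h0; rw [fundSeq_zero]
    by_cases hs : ∃ β, b = β + 1
    · obtain ⟨β, rfl⟩ := hs
      have hlt : β < β + 1 := by simp
      rw [fundSeq_add_one, fgh_add_one, Function.iterate_succ_apply]
      exact Function.id_le_iterate_of_id_le (fun y => (lt_fgh (hlt.trans hb) y).le) n _
    · rw [fgh_limit hb h0 hs]

lemma fgh_monotone {a : Ordinal.{0}} (h : a < eps0) : Monotone (fgh a) := by
  induction a using WellFoundedLT.induction with
  | ind a ih =>
    intro x y hxy
    by_cases h0 : a = 0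
    · subst h0; rw [fgh_zero, fgh_zero]; omega
    by_cases hs : ∃ β, a = β + 1
    · obtain ⟨β, rfl⟩ := hs
      have hlt : β < β + 1 := by simp
      rw [fgh_add_one, fgh_add_one]
      have hid : id ≤ fgh β := fun z => (lt_fgh (hlt.trans h) z).le
      exact ((ih β hlt (hlt.trans h)).iterate (x + 1) hxy).trans
        (Function.monotone_iterate_of_id_le hid (Nat.succ_le_succ hxy) y)
    · rw [fgh_limit h h0 hs, fgh_limit h h0 hs]
      have hx := fundSeq_lt h h0 x
      have hy := fundSeq_lt h h0 y
      exact (ih _ hx (hx.trans h) hxy).trans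
        (fgh_le_of_stepDown (stepDown_fundSeq_fundSeq hxy h) (hy.trans h))

/-- If `α < ε₀`, `N > 0` and `ω_N →_N α+1`, then for every `n ≥ N`,
`F_{ω_n+α}(F_{ε₀}(n−1)) ≤ F_{ε₀}(n)`. -/
theorem stmt10 : ∀ (α : Ordinal.{0}) (N : ℕ), α < eps0 → 0 < N →
    stepDown N (omegaTower N 1) (α + 1) →
    ∀ n : ℕ, N ≤ n → fgh (omegaTower n 1 + α) (Feps0 (n - 1)) ≤ Feps0 n := by
  intro α N _ hN hα n hn
  have hα' : stepDown n (omegaTower n 1) (α + 1) :=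
    (stepDown_tower n hn).trans (stepDown_mono hn hα (tower_lt_eps0 N))
  have hdown : stepDown n (omegaTower (n + 1) 1) (omegaTower n 1 + α + 1) := by
    rw [add_assoc]
    exact (stepDown_tower_double (by omega) n).trans (stepDown_tower_add hα')
  have hlt1 : omegaTower n 1 + α + 1 < eps0 :=
    (hdown.le (tower_lt_eps0 _)).trans_lt (tower_lt_eps0 _)
  have hlt : omegaTower n 1 + α < eps0 := lt_trans (by simp) hlt1
  have hα1 : α + 1 < eps0 := (hα'.le (tower_lt_eps0 _)).trans_lt (tower_lt_eps0 _)
  -- From `α →_n 0` it follows that `ω_n + α →_n ω_n`.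
  have hbase : fgh (omegaTower n 1) n ≤ fgh (omegaTower n 1 + α) n := by
    have hαe : α < eps0 := lt_trans (by simp) hα1
    have hle : α ≤ omegaTower n 1 := le_trans (by simp) (hα'.le (tower_lt_eps0 _))
    obtain ⟨m, rfl⟩ : ∃ m, n = m + 1 := ⟨n - 1, by omega⟩
    have := stepDown_add (ν := omegaTower m 1) 1 (stepDown_zero (m + 1) hαe) hαe hle
    rw [mul_one, add_zero] at this
    exact fgh_le_of_stepDown this hlt
  have hstart : Feps0 (n - 1) ≤ fgh (omegaTower n 1 + α) n := by
    unfold Feps0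
    rw [Nat.sub_add_cancel (by omega)]
    exact (fgh_monotone (tower_lt_eps0 n) (Nat.sub_le n 1)).trans hbase
  have hid : id ≤ fgh (omegaTower n 1 + α) := fun z => (lt_fgh hlt z).le
  calc fgh (omegaTower n 1 + α) (Feps0 (n - 1))
      ≤ (fgh (omegaTower n 1 + α))^[2] n := fgh_monotone hlt hstart
    _ ≤ (fgh (omegaTower n 1 + α))^[n + 1] n :=
        Function.monotone_iterate_of_id_le hid (by omega) n
    _ = fgh (omegaTower n 1 + α + 1) n := (fgh_add_one _ _).symm
    _ ≤ Feps0 n := fgh_le_of_stepDown hdown (tower_lt_eps0 _)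

end
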